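/- Let v₁, …, vₙ ∈ ℂⁿ and let A be the n × n complex matrix with columns v₁, …, vₙ. Let G be the real n × n matrix with entries G j k = Re ⟪v_j, v_k⟫, where ⟪·,·⟫ is the standard Hermitian inner product on ℂⁿ. Then ‖det A‖² ≤ det G. Moreover, if all the vectors v_j have real coordinates, then equality holds. -/

import Mathlib

open Matrix ComplexOrder in
theorem aux_det_le {n : ℕ} (M : Matrix (Fin n) (Fin n) ℂ)
    (h : (Mᴴ * M).trace = (n : ℂ)) : ‖M.det‖ ^ 2 ≤ 1 := by
  have hP : (Mᴴ * M).PosSemidef := posSemidef_conjTranspose_mul_self M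
  have hd := hP.1.det_eq_prod_eigenvalues
  have ht := hP.1.trace_eq_sum_eigenvalues
  have hdet : ((‖M.det‖ ^ 2 : ℝ) : ℂ) = (Mᴴ * M).det := by
    rw [det_mul, det_conjTranspose]
    push_cast
    exact (RCLike.conj_mul M.det).symm
  rw [← hdet] at hd
  rw [h] at ht
  have hd' : ‖M.det‖ ^ 2 = ∏ i, hP.1.eigenvalues i := by
    apply Complex.ofReal_injective
    rw [hd]; push_cast; rfl
  have ht' : (n : ℝ) = ∑ i, hP.1.eigenvalues i := by
    apply Complex.ofReal_injective
    push_cast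
    rw [ht]; rfl
  rw [hd']
  calc ∏ i, hP.1.eigenvalues i ≤ ∏ i, Real.exp (hP.1.eigenvalues i - 1) := by
        apply Finset.prod_le_prod
        · intro i _; exact hP.eigenvalues_nonneg i
        · intro i _
          have := Real.add_one_le_exp (hP.1.eigenvalues i - 1)
          linarith
    _ = 1 := by
        rw [← Real.exp_sum, Finset.sum_sub_distrib, ← ht']
        simp

open Matrix in
theorem aux_trace {n : ℕ} (A : Matrix (Fin n) (Fin n) ℂ) (P Q : Matrix (Fin n) (Fin n) ℝ)
    (h : ∀ i j, A i j = P i j + Q i j * Complex.I) :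
    (Aᴴ * A).trace = ((Pᵀ * P + Qᵀ * Q).trace : ℝ) := by
  simp only [trace, diag, mul_apply, Matrix.add_apply, conjTranspose_apply, transpose_apply, h]
  push_cast
  refine Finset.sum_congr rfl fun j _ => ?_
  rw [← Finset.sum_add_distrib]
  refine Finset.sum_congr rfl fun i _ => ?_
  apply Complex.ext <;> simp <;> ring

open Matrix MatrixOrder in
/-- Hadamard-type comass inequality: for vectors `v₁, …, vₙ ∈ ℂⁿ` with column matrix `A`
and real Gram matrix `G j k = Re ⟪v_j, v_k⟫`, one has `‖det A‖² ≤ det G`, with equality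
when all the vectors have real coordinates. -/
theorem normSq_det_le_det_realGram {n : ℕ} (v : Fin n → (Fin n → ℂ))
    (A : Matrix (Fin n) (Fin n) ℂ) (hA : ∀ i j, A i j = v j i)
    (G : Matrix (Fin n) (Fin n) ℝ)
    (hG : ∀ j k, G j k = (∑ i, (starRingEnd ℂ) (v j i) * v k i).re) :
    ‖A.det‖ ^ 2 ≤ G.det ∧
    ((∀ j i, (v j i).im = 0) → ‖A.det‖ ^ 2 = G.det) := by
  obtain ⟨P, hP⟩ : ∃ P : Matrix (Fin n) (Fin n) ℝ, ∀ i j, P i j = (v j i).re :=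
    ⟨Matrix.of fun i j => (v j i).re, fun _ _ => rfl⟩
  obtain ⟨Q, hQ⟩ : ∃ Q : Matrix (Fin n) (Fin n) ℝ, ∀ i j, Q i j = (v j i).im :=
    ⟨Matrix.of fun i j => (v j i).im, fun _ _ => rfl⟩
  have hGPQ : G = Pᵀ * P + Qᵀ * Q := by
    ext j k
    simp only [hG, Matrix.add_apply, mul_apply, transpose_apply, hP, hQ, Complex.re_sum]
    rw [← Finset.sum_add_distrib]
    exact Finset.sum_congr rfl fun i _ => by simp
  have hAPQ : A = P.map Complex.ofRealHom + Complex.I • Q.map Complex.ofRealHom := by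
    ext i j
    simp only [hA, Matrix.add_apply, Matrix.smul_apply, map_apply, hP, hQ]
    apply Complex.ext <;> simp
  have hGps : G.PosSemidef := by
    rw [hGPQ]
    have h1 := posSemidef_conjTranspose_mul_self P
    have h2 := posSemidef_conjTranspose_mul_self Q
    rw [conjTranspose_eq_transpose_of_trivial] at h1 h2
    exact h1.add h2
  constructor
  · by_cases hdet : G.det = 0
    · obtain ⟨x, hx, hGx⟩ := exists_mulVec_eq_zero_iff.mpr hdet
      have h0 : (P *ᵥ x) ⬝ᵥ (P *ᵥ x) + (Q *ᵥ x) ⬝ᵥ (Q *ᵥ x) = 0 := by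
        have : x ⬝ᵥ (G *ᵥ x) = 0 := by rw [hGx]; simp
        rw [hGPQ, add_mulVec, dotProduct_add, ← mulVec_mulVec, ← mulVec_mulVec,
          dotProduct_mulVec, vecMul_transpose, dotProduct_mulVec x Qᵀ, vecMul_transpose] at this
        exact this
      have hp : 0 ≤ (P *ᵥ x) ⬝ᵥ (P *ᵥ x) := Finset.sum_nonneg fun i _ => mul_self_nonneg _
      have hq : 0 ≤ (Q *ᵥ x) ⬝ᵥ (Q *ᵥ x) := Finset.sum_nonneg fun i _ => mul_self_nonneg _
      have hPx : P *ᵥ x = 0 := dotProduct_self_eq_zero.mp (by linarith)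
      have hQx : Q *ᵥ x = 0 := dotProduct_self_eq_zero.mp (by linarith)
      have hAd : A.det = 0 := by
        apply exists_mulVec_eq_zero_iff.mp
        refine ⟨fun i => (x i : ℂ), ?_, ?_⟩
        · intro h
          apply hx
          ext i
          have := congrFun h i
          simpa using this
        · have key : ∀ R : Matrix (Fin n) (Fin n) ℝ, R *ᵥ x = 0 →
              (R.map Complex.ofRealHom) *ᵥ (fun i => (x i : ℂ)) = 0 := by
            intro R hR
            ext i
            have := congrArg (fun r : ℝ => (r : ℂ)) (congrFun hR i)
            simpa [mulVec, dotProduct] using this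
          rw [hAPQ, add_mulVec, smul_mulVec, key P hPx, key Q hQx]
          simp
      rw [hAd, hdet]; simp
    · obtain ⟨B, hB⟩ : ∃ B : Matrix (Fin n) (Fin n) ℝ, G = Bᵀ * B := by
        obtain ⟨B, hB⟩ := CStarAlgebra.nonneg_iff_eq_star_mul_self.mp hGps.nonneg
        exact ⟨B, by rw [hB, star_eq_conjTranspose, conjTranspose_eq_transpose_of_trivial]⟩
      have hGB : G.det = B.det ^ 2 := by rw [hB, det_mul, det_transpose, sq]
      have hBd : B.det ≠ 0 := by
        intro h; apply hdet; rw [hGB, h]; simp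
      have hBu : IsUnit B.det := isUnit_iff_ne_zero.mpr hBd
      have hBD : B * B⁻¹ = 1 := mul_nonsing_inv B hBu
      set D := B⁻¹ with hD
      have htr : ((A * D.map Complex.ofRealHom)ᴴ * (A * D.map Complex.ofRealHom)).trace
          = (n : ℂ) := by
        rw [aux_trace _ (P * D) (Q * D)]
        · have : (P * D)ᵀ * (P * D) + (Q * D)ᵀ * (Q * D) = 1 := by
            calc _ = Dᵀ * (Pᵀ * P + Qᵀ * Q) * D := by
                  simp only [transpose_mul, mul_add, add_mul, Matrix.mul_assoc]
              _ = (B * D)ᵀ * (B * D) := by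
                  rw [← hGPQ, hB]; simp only [transpose_mul, Matrix.mul_assoc]
              _ = 1 := by rw [hBD]; simp
          rw [this]; simp
        · intro i j
          rw [hAPQ, add_mul, smul_mul, ← Matrix.map_mul, ← Matrix.map_mul]
          simp only [Matrix.add_apply, Matrix.smul_apply, map_apply, smul_eq_mul, Complex.ofRealHom_eq_coe]
          rw [mul_comm Complex.I]
      have h1 := aux_det_le _ htr
      have hdd : (A * D.map Complex.ofRealHom).det = A.det * (D.det : ℂ) := by
        rw [det_mul]; congr 1
        exact (RingHom.map_det Complex.ofRealHom D).symm
      rw [hdd, norm_mul, mul_pow, Complex.norm_real, Real.norm_eq_abs, sq_abs] at h1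
      have h2 : B.det * D.det = 1 := by rw [← det_mul, hBD, det_one]
      rw [hGB]
      calc ‖A.det‖ ^ 2 = (‖A.det‖ ^ 2 * D.det ^ 2) * B.det ^ 2 := by
            rw [mul_assoc, ← mul_pow, mul_comm D.det, h2]; simp
        _ ≤ 1 * B.det ^ 2 := by gcongr
        _ = _ := one_mul _
  · intro him
    have hQ0 : Q = 0 := by ext i j; simp [hQ, him]
    have hAP : A.det = (P.det : ℂ) := by
      have : A = P.map Complex.ofRealHom := by rw [hAPQ, hQ0]; ext; simp
      rw [this]
      exact (RingHom.map_det Complex.ofRealHom P).symm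
    rw [hAP, hGPQ, hQ0, Complex.norm_real, Real.norm_eq_abs, sq_abs]
    simp [sq]
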